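/- arXiv:1105.0105 — 2 statements merged into one kernel-verified Lean document; each statement's English description precedes it below -/
import Mathlib

section
/- Let D_a and D_b be Dirac structures on V with Δ_a = pr_V(D_a), Δ_b = pr_V(D_b), and Dirac two-forms Ω_a and Ω_b. If Ω_b = 0 (identically on Δ_b × Δ_b), then D_b = Δ_b × Δ_b°, and D_a ⋈ D_b = {(v,α) ∈ V × V* : v ∈ Δ_a ∩ Δ_b and α(w) = Ω_a(v,w) for all w ∈ Δ_a ∩ Δ_b}. -/
/-- The symmetric pairing on `V × V*`: `⟨⟨(v,α),(w,β)⟩⟩ = α(w) + β(v)`. -/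
def symPair {V : Type*} [AddCommGroup V] [Module ℝ V]
    (x y : V × Module.Dual ℝ V) : ℝ := x.2 y.1 + y.2 x.1

/-- A Dirac structure on `V` is a subspace `D ⊆ V × V*` with `D = D^⊥`,
where the orthogonal complement is taken relative to the symmetric pairing. -/
def IsDirac {V : Type*} [AddCommGroup V] [Module ℝ V]
    (D : Set (V × Module.Dual ℝ V)) : Prop :=
  ∀ y, y ∈ D ↔ ∀ x ∈ D, symPair x y = 0

/-- The bowtie product `D_a ⋈ D_b`: all `(v,α)` such that there exists
`β ∈ V*` with `(v, α+β) ∈ D_a` and `(v, −β) ∈ D_b`. -/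
def bowtie {V : Type*} [AddCommGroup V] [Module ℝ V]
    (Da Db : Set (V × Module.Dual ℝ V)) : Set (V × Module.Dual ℝ V) :=
  {p | ∃ β : Module.Dual ℝ V, (p.1, p.2 + β) ∈ Da ∧ (p.1, -β) ∈ Db}

/-! The covectors over a fixed `v` in a Dirac structure `D` form a coset of `Δ°`, so `D` is
recovered from `Δ` and `Ω`. The covectors over `v` in `D_a ⋈ D_b` are the sums of those in `D_a` and
in `D_b`, hence form a coset of `Δ_a° + Δ_b° = (Δ_a ∩ Δ_b)°`. So the two-form of `D_a ⋈ D_b` is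
`Ω_a + Ω_b` restricted to `Δ_a ∩ Δ_b`; here `Ω_b = 0`. -/

section

variable {V : Type*} [AddCommGroup V] [Module ℝ V]
  {D Da Db : Set (V × Module.Dual ℝ V)} {Ω Ωa Ωb : V → V → ℝ}
  {v : V} {α β γ : Module.Dual ℝ V} {p : V × Module.Dual ℝ V}

/-- `Ω` restricts to the Dirac two-form of `D` on `Δ = pr_V(D)`. It is a function on all of `V × V`
whose values outside `Δ × Δ` are arbitrary. -/
def IsDiracForm (D : Set (V × Module.Dual ℝ V)) (Ω : V → V → ℝ) : Prop :=
  ∀ p ∈ D, ∀ q ∈ D, Ω p.1 q.1 = p.2 q.1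

namespace IsDirac

/-- A Dirac structure as a subspace of `V × V*`: linearity is not part of `IsDirac`, but follows
from `D = D^⊥`. -/
def toSubmodule (h : IsDirac D) : Submodule ℝ (V × Module.Dual ℝ V) where
  carrier := D
  zero_mem' := (h 0).2 fun x _ => by simp [symPair]
  add_mem' {y z} hy hz := (h _).2 fun x hx => by
    have hxy : x.2 y.1 + y.2 x.1 = 0 := (h y).1 hy x hx
    have hxz : x.2 z.1 + z.2 x.1 = 0 := (h z).1 hz x hx
    simp only [symPair, Prod.fst_add, Prod.snd_add, map_add, LinearMap.add_apply]
    linear_combination hxy + hxz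
  smul_mem' c y hy := (h _).2 fun x hx => by
    have hxy : x.2 y.1 + y.2 x.1 = 0 := (h y).1 hy x hx
    simp only [symPair, Prod.smul_fst, Prod.smul_snd, map_smul, LinearMap.smul_apply, smul_eq_mul]
    linear_combination c * hxy

/-- The subspace `Δ = pr_V(D)` of `V`, on which the Dirac two-form of `D` lives. -/
def proj (h : IsDirac D) : Submodule ℝ V :=
  h.toSubmodule.map (LinearMap.fst ℝ V (Module.Dual ℝ V))

theorem mem_proj (h : IsDirac D) : v ∈ h.proj ↔ ∃ α, (v, α) ∈ D := by
  simp [proj, toSubmodule]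

theorem mk_zero_mem_iff (h : IsDirac D) : (0, γ) ∈ D ↔ γ ∈ h.proj.dualAnnihilator := by
  simp [h (0, γ), symPair, Submodule.mem_dualAnnihilator, mem_proj]

theorem mk_mem_iff_sub_mem_dualAnnihilator (h : IsDirac D) (hα : (v, α) ∈ D) :
    (v, γ) ∈ D ↔ γ - α ∈ h.proj.dualAnnihilator := by
  have hsub : (v, γ) - (v, α) = (0, γ - α) := by simp
  rw [← h.mk_zero_mem_iff, ← hsub]
  exact (h.toSubmodule.sub_mem_iff_left hα).symm

theorem mem_iff_of_isDiracForm (h : IsDirac D) (hΩ : IsDiracForm D Ω) :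
    p ∈ D ↔ p.1 ∈ h.proj ∧ ∀ w ∈ h.proj, p.2 w = Ω p.1 w := by
  obtain ⟨v, γ⟩ := p
  have fiber {α : Module.Dual ℝ V} (hα : (v, α) ∈ D) :
      (v, γ) ∈ D ↔ ∀ w ∈ h.proj, γ w = Ω v w := by
    rw [h.mk_mem_iff_sub_mem_dualAnnihilator hα, Submodule.mem_dualAnnihilator]
    refine forall₂_congr fun w hw => ?_
    obtain ⟨δ, hδ⟩ := h.mem_proj.1 hw
    rw [LinearMap.sub_apply, sub_eq_zero, hΩ _ hα _ hδ]
  constructor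
  · exact fun hγ => ⟨h.mem_proj.2 ⟨γ, hγ⟩, (fiber hγ).1 hγ⟩
  · rintro ⟨hv, hγ⟩
    obtain ⟨α, hα⟩ := h.mem_proj.1 hv
    exact (fiber hα).2 hγ

end IsDirac

theorem mk_mem_bowtie_iff :
    (v, γ) ∈ bowtie Da Db ↔ ∃ α β, (v, α) ∈ Da ∧ (v, β) ∈ Db ∧ α + β = γ := by
  constructor
  · rintro ⟨β, hα, hβ⟩
    exact ⟨γ + β, -β, hα, hβ, add_neg_cancel_right γ β⟩
  · rintro ⟨α, β, hα, hβ, rfl⟩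
    exact ⟨-β, by simpa using hα, by simpa using hβ⟩

namespace IsDirac

theorem mk_mem_bowtie_iff_sub_mem_dualAnnihilator (ha : IsDirac Da) (hb : IsDirac Db)
    (hα : (v, α) ∈ Da) (hβ : (v, β) ∈ Db) :
    (v, γ) ∈ bowtie Da Db ↔ γ - (α + β) ∈ (ha.proj ⊓ hb.proj).dualAnnihilator := by
  rw [Subspace.dualAnnihilator_inf_eq, Submodule.mem_sup, mk_mem_bowtie_iff]
  constructor
  · rintro ⟨α', β', hα', hβ', rfl⟩
    exact ⟨α' - α, (ha.mk_mem_iff_sub_mem_dualAnnihilator hα).1 hα',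
      β' - β, (hb.mk_mem_iff_sub_mem_dualAnnihilator hβ).1 hβ', by abel⟩
  · rintro ⟨δa, hδa, δb, hδb, hsum⟩
    refine ⟨α + δa, β + δb, (ha.mk_mem_iff_sub_mem_dualAnnihilator hα).2 ?_,
      (hb.mk_mem_iff_sub_mem_dualAnnihilator hβ).2 ?_, ?_⟩
    · rwa [add_sub_cancel_left]
    · rwa [add_sub_cancel_left]
    · rw [add_add_add_comm, hsum, add_sub_cancel]

theorem mem_bowtie_iff_of_isDiracForm (ha : IsDirac Da) (hb : IsDirac Db)
    (hΩa : IsDiracForm Da Ωa) (hΩb : IsDiracForm Db Ωb) :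
    p ∈ bowtie Da Db ↔ p.1 ∈ ha.proj ⊓ hb.proj ∧
      ∀ w ∈ ha.proj ⊓ hb.proj, p.2 w = Ωa p.1 w + Ωb p.1 w := by
  obtain ⟨v, γ⟩ := p
  have fiber {α β : Module.Dual ℝ V} (hα : (v, α) ∈ Da) (hβ : (v, β) ∈ Db) :
      (v, γ) ∈ bowtie Da Db ↔ ∀ w ∈ ha.proj ⊓ hb.proj, γ w = Ωa v w + Ωb v w := by
    rw [ha.mk_mem_bowtie_iff_sub_mem_dualAnnihilator hb hα hβ, Submodule.mem_dualAnnihilator]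
    refine forall₂_congr fun w hw => ?_
    obtain ⟨δa, hδa⟩ := ha.mem_proj.1 hw.1
    obtain ⟨δb, hδb⟩ := hb.mem_proj.1 hw.2
    rw [LinearMap.sub_apply, sub_eq_zero, LinearMap.add_apply, hΩa _ hα _ hδa, hΩb _ hβ _ hδb]
  constructor
  · intro hγ
    obtain ⟨α, β, hα, hβ, -⟩ := mk_mem_bowtie_iff.1 hγ
    exact ⟨⟨ha.mem_proj.2 ⟨α, hα⟩, hb.mem_proj.2 ⟨β, hβ⟩⟩, (fiber hα hβ).1 hγ⟩
  · rintro ⟨⟨hva, hvb⟩, hγ⟩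
    obtain ⟨α, hα⟩ := ha.mem_proj.1 hva
    obtain ⟨β, hβ⟩ := hb.mem_proj.1 hvb
    exact (fiber hα hβ).2 hγ

end IsDirac

end

theorem bowtie_with_zero_form_general
    {V : Type*} [AddCommGroup V] [Module ℝ V]
    (Da Db : Set (V × Module.Dual ℝ V))
    (ha : IsDirac Da) (hb : IsDirac Db)
    (Ωa : V → V → ℝ)
    (hΩa : ∀ p ∈ Da, ∀ q ∈ Da, Ωa p.1 q.1 = p.2 q.1)
    (hΩb0 : ∀ p ∈ Db, ∀ q ∈ Db, p.2 q.1 = 0) :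
    Db = {p : V × Module.Dual ℝ V |
        (∃ β, (p.1, β) ∈ Db) ∧ ∀ w : V, (∃ β, (w, β) ∈ Db) → p.2 w = 0} ∧
    bowtie Da Db = {p : V × Module.Dual ℝ V |
        ((∃ α, (p.1, α) ∈ Da) ∧ (∃ β, (p.1, β) ∈ Db)) ∧
        ∀ w : V, (∃ α, (w, α) ∈ Da) → (∃ β, (w, β) ∈ Db) →
          p.2 w = Ωa p.1 w} := by
  have hΩb : IsDiracForm Db 0 := fun p hp q hq => (hΩb0 p hp q hq).symm
  constructor
  · ext p
    simpa only [IsDirac.mem_proj, Pi.zero_apply, Set.mem_ofPred_eq]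
      using hb.mem_iff_of_isDiracForm hΩb
  · ext p
    simpa only [Submodule.mem_inf, IsDirac.mem_proj, and_imp, Pi.zero_apply, add_zero,
      Set.mem_ofPred_eq]
      using ha.mem_bowtie_iff_of_isDiracForm hb hΩa hΩb

/-- Let `D_a`, `D_b` be Dirac structures on `V` with `Δ_a = pr_V(D_a)`,
`Δ_b = pr_V(D_b)` and Dirac two-forms `Ω_a`, `Ω_b`.  If `Ω_b = 0`
(identically on `Δ_b × Δ_b`), then `D_b = Δ_b × Δ_b°`, and `D_a ⋈ D_b` is the
Dirac structure induced by the constraint `Δ_a ∩ Δ_b` and the two-form `Ω_a`. -/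
theorem bowtie_with_zero_form
    {V : Type*} [AddCommGroup V] [Module ℝ V] [FiniteDimensional ℝ V]
    (Da Db : Set (V × Module.Dual ℝ V))
    (ha : IsDirac Da) (hb : IsDirac Db)
    (Ωa : V → V → ℝ)
    (hΩa : ∀ p ∈ Da, ∀ q ∈ Da, Ωa p.1 q.1 = p.2 q.1)
    (hΩb0 : ∀ p ∈ Db, ∀ q ∈ Db, p.2 q.1 = 0) :
    Db = {p : V × Module.Dual ℝ V |
        (∃ β, (p.1, β) ∈ Db) ∧ ∀ w : V, (∃ β, (w, β) ∈ Db) → p.2 w = 0} ∧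
    bowtie Da Db = {p : V × Module.Dual ℝ V |
        ((∃ α, (p.1, α) ∈ Da) ∧ (∃ β, (p.1, β) ∈ Db)) ∧
        ∀ w : V, (∃ α, (w, α) ∈ Da) → (∃ β, (w, β) ∈ Db) →
          p.2 w = Ωa p.1 w} :=
  bowtie_with_zero_form_general Da Db ha hb Ωa hΩa hΩb0
end

section
/- Let D_a and D_b be Dirac structures on V. Let K = {((0,0),(−ξ,ξ)) : ξ ∈ V*} ⊆ (V × V) × (V* × V*), let K^⊥ be its orthogonal complement with respect to the symmetric pairing on (V × V) × (V × V)*, and define the Dirac tensor product D_a ⊠ D_b as the quotient ((D_a ⊕ D_b) ∩ (K^⊥ + K)) / K. Then the map sending the class of ((v,v),(α,α')) ∈ (D_a ⊕ D_b) ∩ (K^⊥ + K) to (v, α + α') ∈ V × V* is a well-defined linear bijection from D_a ⊠ D_b onto the bowtie product D_a ⋈ D_b; in particular D_a ⊠ D_b is isomorphic to D_a ⋈ D_b. -/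
/-- The symmetric pairing on `(V × V) × (V × V)*`, identifying `(V × V)*` with
`V* × V*`. -/
def symPair₂ {V : Type*} [AddCommGroup V] [Module ℝ V]
    (x y : (V × V) × (Module.Dual ℝ V × Module.Dual ℝ V)) : ℝ :=
  x.2.1 y.1.1 + x.2.2 y.1.2 + y.2.1 x.1.1 + y.2.2 x.1.2

/-!
Pairing with `((0, 0), (-ξ, ξ))` evaluates `ξ` on `v₂ - v₁`, and functionals separate points, so
`K^⊥` is the diagonal condition `v₁ = v₂`. In particular `K ⊆ K^⊥`, so `K^⊥ + K = K^⊥`, and the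
numerator of `D_a ⊠ D_b` consists of the `((v, v), (α₁, α₂))` with `(v, α₁) ∈ D_a` and
`(v, α₂) ∈ D_b`. On `K^⊥` the map `((v, v), (α₁, α₂)) ↦ (v, α₁ + α₂)` has kernel `K`, and it
maps the numerator onto the bowtie product: take `β = -α₂`.
-/

section SumMap

/-- The subspace `K` of `(V × V) × (W × W)` consisting of the `((0, 0), (-ξ, ξ))`. The Dirac tensor
product uses `W = V*`. -/
def sndAntidiagonal (V W : Type*) [AddCommGroup V] [AddCommGroup W] : Set ((V × V) × (W × W)) :=
  {p | ∃ ξ : W, p = ((0, 0), (-ξ, ξ))}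

/-- The linear map `((v₁, v₂), (α₁, α₂)) ↦ (v₁, α₁ + α₂)`, which induces the comparison map from the
Dirac tensor product to the bowtie product. Choosing `v₁` rather than `v₂` is immaterial on the
diagonal `v₁ = v₂`. -/
def fstProdAdd (R V W : Type*) [Semiring R] [AddCommMonoid V] [AddCommMonoid W] [Module R V]
    [Module R W] : ((V × V) × (W × W)) →ₗ[R] V × W :=
  (LinearMap.fst R V V).prodMap (LinearMap.id.coprod LinearMap.id)

@[simp]
theorem fstProdAdd_apply {R V W : Type*} [Semiring R] [AddCommMonoid V] [AddCommMonoid W]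
    [Module R V] [Module R W] (x : (V × V) × (W × W)) :
    fstProdAdd R V W x = (x.1.1, x.2.1 + x.2.2) :=
  rfl

variable {R V W : Type*} [Semiring R] [AddCommGroup V] [AddCommGroup W] [Module R V]
  [Module R W]

theorem mem_sndAntidiagonal_iff {x : (V × V) × (W × W)} :
    x ∈ sndAntidiagonal V W ↔ x.1.1 = x.1.2 ∧ fstProdAdd R V W x = 0 := by
  obtain ⟨⟨v₁, v₂⟩, α₁, α₂⟩ := x
  constructor
  · rintro ⟨ξ, ⟨⟩⟩
    simp
  · rintro ⟨rfl : v₁ = v₂, h⟩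
    obtain ⟨rfl : v₁ = 0, hα : α₁ + α₂ = 0⟩ := Prod.mk.inj h
    exact ⟨α₂, by rw [eq_neg_of_add_eq_zero_left hα]⟩

theorem sub_mem_sndAntidiagonal_iff {x y : (V × V) × (W × W)} (hx : x.1.1 = x.1.2)
    (hy : y.1.1 = y.1.2) :
    x - y ∈ sndAntidiagonal V W ↔ fstProdAdd R V W x = fstProdAdd R V W y := by
  have hxy : (x - y).1.1 = (x - y).1.2 := congrArg₂ (· - ·) hx hy
  rw [mem_sndAntidiagonal_iff (R := R), and_iff_right hxy, map_sub, sub_eq_zero]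

end SumMap

section TensorProduct

open Module (Dual)

variable {V : Type*} [AddCommGroup V] [Module ℝ V]

/-- The orthogonal complement of a subset of `(V × V) × (V × V)*` for the symmetric pairing. -/
def symPair₂Orthogonal (S : Set ((V × V) × (Dual ℝ V × Dual ℝ V))) :
    Set ((V × V) × (Dual ℝ V × Dual ℝ V)) :=
  {y | ∀ x ∈ S, symPair₂ x y = 0}

/-- The Dirac sum `D_a ⊕ D_b`, for arbitrary subsets of `V × V*`. -/
def diracSum (Da Db : Set (V × Dual ℝ V)) : Set ((V × V) × (Dual ℝ V × Dual ℝ V)) :=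
  {p | (p.1.1, p.2.1) ∈ Da ∧ (p.1.2, p.2.2) ∈ Db}

/-- The numerator `(D_a ⊕ D_b) ∩ (K^⊥ + K)` of the Dirac tensor product `D_a ⊠ D_b`. -/
def tensorNumerator (Da Db : Set (V × Dual ℝ V)) : Set ((V × V) × (Dual ℝ V × Dual ℝ V)) :=
  diracSum Da Db ∩ {y | ∃ a ∈ symPair₂Orthogonal (sndAntidiagonal V (Dual ℝ V)),
    ∃ b ∈ sndAntidiagonal V (Dual ℝ V), y = a + b}

theorem mem_symPair₂Orthogonal_sndAntidiagonal_iff {y : (V × V) × (Dual ℝ V × Dual ℝ V)} :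
    y ∈ symPair₂Orthogonal (sndAntidiagonal V (Dual ℝ V)) ↔ y.1.1 = y.1.2 := by
  have pairing (ξ : Dual ℝ V) : symPair₂ ((0, 0), (-ξ, ξ)) y = ξ (y.1.2 - y.1.1) := by
    simp [symPair₂, neg_add_eq_sub]
  calc
    y ∈ symPair₂Orthogonal (sndAntidiagonal V (Dual ℝ V))
      ↔ ∀ ξ : Dual ℝ V, ξ (y.1.2 - y.1.1) = 0 := by
        simp [symPair₂Orthogonal, sndAntidiagonal, pairing]
    _ ↔ y.1.2 - y.1.1 = 0 := Module.forall_dual_apply_eq_zero_iff ℝ _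
    _ ↔ y.1.1 = y.1.2 := sub_eq_zero.trans eq_comm

theorem exists_eq_add_sndAntidiagonal_iff {y : (V × V) × (Dual ℝ V × Dual ℝ V)} :
    (∃ a ∈ symPair₂Orthogonal (sndAntidiagonal V (Dual ℝ V)),
      ∃ b ∈ sndAntidiagonal V (Dual ℝ V), y = a + b) ↔ y.1.1 = y.1.2 := by
  simp only [mem_symPair₂Orthogonal_sndAntidiagonal_iff]
  constructor
  · rintro ⟨a, ha, b, hb, rfl⟩
    exact congrArg₂ (· + ·) ha (mem_sndAntidiagonal_iff (R := ℝ).1 hb).1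
  · intro hy
    have zero_mem : (0 : (V × V) × (Dual ℝ V × Dual ℝ V)) ∈ sndAntidiagonal V (Dual ℝ V) :=
      mem_sndAntidiagonal_iff (R := ℝ).2 ⟨rfl, map_zero _⟩
    exact ⟨y, hy, 0, zero_mem, (add_zero y).symm⟩

theorem mem_tensorNumerator_iff {Da Db : Set (V × Dual ℝ V)}
    {x : (V × V) × (Dual ℝ V × Dual ℝ V)} :
    x ∈ tensorNumerator Da Db ↔ x ∈ diracSum Da Db ∧ x.1.1 = x.1.2 :=
  and_congr_right fun _ => exists_eq_add_sndAntidiagonal_iff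

theorem image_fstProdAdd_tensorNumerator (Da Db : Set (V × Dual ℝ V)) :
    fstProdAdd ℝ V (Dual ℝ V) '' tensorNumerator Da Db = bowtie Da Db := by
  ext ⟨v, α⟩
  constructor
  · rintro ⟨⟨⟨v₁, v₂⟩, α₁, α₂⟩, hx, hxv⟩
    obtain ⟨⟨hDa, hDb⟩, rfl : v₁ = v₂⟩ := mem_tensorNumerator_iff.1 hx
    obtain ⟨rfl, rfl⟩ := Prod.mk.inj hxv
    exact ⟨-α₂, by simpa using hDa, by simpa using hDb⟩
  · rintro ⟨β, hDa, hDb⟩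
    exact ⟨((v, v), (α + β, -β)), mem_tensorNumerator_iff.2 ⟨⟨hDa, hDb⟩, rfl⟩, by simp⟩

theorem tensor_product_equiv_bowtie_general (Da Db : Set (V × Dual ℝ V)) :
    (∀ x ∈ tensorNumerator Da Db, ∀ y ∈ tensorNumerator Da Db,
      x - y ∈ sndAntidiagonal V (Dual ℝ V) →
        fstProdAdd ℝ V (Dual ℝ V) x = fstProdAdd ℝ V (Dual ℝ V) y) ∧
    (∀ x ∈ tensorNumerator Da Db, ∀ y ∈ tensorNumerator Da Db,
      fstProdAdd ℝ V (Dual ℝ V) x = fstProdAdd ℝ V (Dual ℝ V) y →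
        x - y ∈ sndAntidiagonal V (Dual ℝ V)) ∧
    fstProdAdd ℝ V (Dual ℝ V) '' tensorNumerator Da Db = bowtie Da Db := by
  have fibres {x y} (hx : x ∈ tensorNumerator Da Db) (hy : y ∈ tensorNumerator Da Db) :=
    sub_mem_sndAntidiagonal_iff (R := ℝ) (mem_tensorNumerator_iff.1 hx).2
      (mem_tensorNumerator_iff.1 hy).2
  exact ⟨fun x hx y hy => (fibres hx hy).1, fun x hx y hy => (fibres hx hy).2,
    image_fstProdAdd_tensorNumerator Da Db⟩

end TensorProduct

/-- Let `D_a`, `D_b` be Dirac structures on `V`.  With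
`K = {((0,0),(−ξ,ξ)) : ξ ∈ V*}`, `K^⊥` its orthogonal complement for the
symmetric pairing on `(V × V) × (V × V)*`, and
`T = (D_a ⊕ D_b) ∩ (K^⊥ + K)` (so that `D_a ⊠ D_b = T / K`), the linear map
sending `((v,v),(α,α'))` to `(v, α + α')` descends to a well-defined linear
bijection from `D_a ⊠ D_b` onto the bowtie product `D_a ⋈ D_b`. -/
theorem tensor_product_equiv_bowtie
    {V : Type*} [AddCommGroup V] [Module ℝ V] [FiniteDimensional ℝ V]
    (Da Db : Set (V × Module.Dual ℝ V)) (ha : IsDirac Da) (hb : IsDirac Db)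
    (K : Set ((V × V) × (Module.Dual ℝ V × Module.Dual ℝ V)))
    (hK : K = {p | ∃ ξ : Module.Dual ℝ V, p = ((0, 0), (-ξ, ξ))})
    (Korth : Set ((V × V) × (Module.Dual ℝ V × Module.Dual ℝ V)))
    (hKorth : Korth = {y | ∀ x ∈ K, symPair₂ x y = 0})
    (T : Set ((V × V) × (Module.Dual ℝ V × Module.Dual ℝ V)))
    (hT : T = {p | (p.1.1, p.2.1) ∈ Da ∧ (p.1.2, p.2.2) ∈ Db}
      ∩ {y | ∃ a ∈ Korth, ∃ b ∈ K, y = a + b})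
    (Φ : ((V × V) × (Module.Dual ℝ V × Module.Dual ℝ V)) →ₗ[ℝ]
      V × Module.Dual ℝ V)
    (hΦ : ∀ x, Φ x = (x.1.1, x.2.1 + x.2.2)) :
    -- `Φ` is well defined on the quotient `T / K`
    (∀ x ∈ T, ∀ y ∈ T, x - y ∈ K → Φ x = Φ y) ∧
    -- the induced map on `T / K` is injective
    (∀ x ∈ T, ∀ y ∈ T, Φ x = Φ y → x - y ∈ K) ∧
    -- and its image is exactly the bowtie product
    Φ '' T = bowtie Da Db := by
  obtain rfl : Φ = fstProdAdd ℝ V (Module.Dual ℝ V) := LinearMap.ext hΦ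
  subst hT hKorth hK
  exact tensor_product_equiv_bowtie_general Da Db
end
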